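/- Let F be a bounded standard set-valued map, T > 0, and for δ ≥ 0 define Λ^δ : C([0,T], ℝ^m) ⇒ C([0,T], ℝ^m) by: y ∈ Λ^δ(z) iff there is an integrable h : [0,T] → ℝ^m with h(u) ∈ F^δ(z(u)) for all u ∈ [0,T] and y(τ) = z(0) + ∫_0^τ h(u) du for all τ ∈ [0,T] (with F^0 = F and Λ = Λ^0). Let (z_n) converge to z uniformly on [0,T] and let (δ_n) be a positive sequence converging to 0. Then limsup_n Λ^{δ_n}(z_n) ⊂ Λ(z): if y_n ∈ Λ^{δ_n}(z_n) for all n and y_n → y uniformly, then y ∈ Λ(z). -/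

import Mathlib

open MeasureTheory Filter Topology Metric Set Pointwise

noncomputable section

/-- `ℝ^m` with the Euclidean norm. -/
abbrev Euc (m : ℕ) := EuclideanSpace ℝ (Fin m)

/-- A standard set-valued map `F : ℝ^m ⇒ ℝ^m`: nonempty compact convex values,
closed graph, and linear growth. -/
def IsStandardSVM {m : ℕ} (F : Euc m → Set (Euc m)) : Prop :=
  (∀ x, (F x).Nonempty ∧ IsCompact (F x) ∧ Convex ℝ (F x)) ∧
  IsClosed {p : Euc m × Euc m | p.2 ∈ F p.1} ∧
  ∃ c > 0, ∀ x, ∀ z ∈ F x, ‖z‖ ≤ c * (1 + ‖x‖)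

/-- A solution of the differential inclusion `dx/dt ∈ F x`: an absolutely continuous
curve `z : ℝ → ℝ^m` (written as the integral of a locally integrable derivative `h`)
with `h t ∈ F (z t)` for almost every `t`. -/
def IsSolution {m : ℕ} (F : Euc m → Set (Euc m)) (z : ℝ → Euc m) : Prop :=
  Continuous z ∧ ∃ h : ℝ → Euc m,
    (∀ a b : ℝ, IntervalIntegrable h volume a b) ∧
    (∀ᵐ t ∂volume, h t ∈ F (z t)) ∧
    ∀ t : ℝ, z t = z 0 + ∫ u in (0:ℝ)..t, h u

/-- `Φ_t(x)`: the set of points reached at time `t` by solutions starting at `x`. -/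
def PhiT {m : ℕ} (F : Euc m → Set (Euc m)) (t : ℝ) (x : Euc m) : Set (Euc m) :=
  {y | ∃ z : ℝ → Euc m, IsSolution F z ∧ z 0 = x ∧ z t = y}

/-- `ω_Φ(x) = ⋂_{t ≥ 0} closure (Φ_{[t,∞)}(x))`. -/
def omegaLimitSV {m : ℕ} (F : Euc m → Set (Euc m)) (x : Euc m) : Set (Euc m) :=
  ⋂ t ∈ Ici (0:ℝ), closure {y | ∃ s ≥ t, y ∈ PhiT F s x}

/-- An attractor for the set-valued dynamical system induced by `F`: a nonempty,
compact, invariant set admitting a neighborhood `U` with `Φ_t(U) ⊆ N^ε(A)` for all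
`t` large enough. -/
def IsAttractorSV {m : ℕ} (F : Euc m → Set (Euc m)) (A : Set (Euc m)) : Prop :=
  A.Nonempty ∧ IsCompact A ∧
  (∀ x ∈ A, ∃ z : ℝ → Euc m, IsSolution F z ∧ z 0 = x ∧ Set.range z ⊆ A) ∧
  ∃ U : Set (Euc m), IsOpen U ∧ A ⊆ U ∧
    ∀ ε > 0, ∃ tε > 0, ∀ t ≥ tε, ∀ x ∈ U, PhiT F t x ⊆ Metric.thickening ε A

/-- The basin of attraction `B(A) = {x | ω_Φ(x) ⊆ A}`. -/
def basinSV {m : ℕ} (F : Euc m → Set (Euc m)) (A : Set (Euc m)) : Set (Euc m) :=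
  {x | omegaLimitSV F x ⊆ A}

/-- The limit set `L(X) = ⋂_{t ≥ 0} closure {X s : s ≥ t}` of a path. -/
def limitSet {m : ℕ} (X : ℝ → Euc m) : Set (Euc m) :=
  ⋂ t ∈ Ici (0:ℝ), closure {y | ∃ s ≥ t, X s = y}

/-- `inf_{z ∈ S_Φ} sup_{u ∈ [0,T]} ‖z u - Y u‖`. -/
def distToSol {m : ℕ} (F : Euc m → Set (Euc m)) (Y : ℝ → Euc m) (T : ℝ) : ℝ :=
  sInf {d | ∃ z : ℝ → Euc m, IsSolution F z ∧ d = ⨆ u : Icc (0:ℝ) T, ‖z u - Y u‖}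

/-- Asymptotic pseudotrajectory of the set-valued dynamical system induced by `F`. -/
def IsAPT {m : ℕ} (F : Euc m → Set (Euc m)) (X : ℝ → Euc m) : Prop :=
  ∀ T > 0, Tendsto (fun t => distToSol F (fun u => X (t + u)) T) atTop (𝓝 0)

/-- A point `p` is attainable by the process `X`: for every `t > 0` and every
neighborhood `U` of `p`, `P(∃ s ≥ t, X s ∈ U) > 0`. -/
def Attainable {m : ℕ} {Ω : Type*} [MeasurableSpace Ω] (μ : Measure Ω)
    (X : ℝ → Ω → Euc m) (p : Euc m) : Prop :=
  ∀ t > 0, ∀ U ∈ 𝓝 p, 0 < μ {ω | ∃ s ≥ t, X s ω ∈ U}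

/-- `τ_n = γ_1 + ⋯ + γ_n`. -/
def tauOf (γ : ℕ → ℝ) (n : ℕ) : ℝ := ∑ i ∈ Finset.range n, γ (i + 1)

/-- `m(t) = sup {j | τ_j ≤ t}`. -/
def mIdx (γ : ℕ → ℝ) (t : ℝ) : ℕ := sSup {j | tauOf γ j ≤ t}

/-- Hypothesis H1: there is `w t α T` decreasing to `0` in `t` dominating the
conditional probability that `sup_{s ≥ t} inf_{z ∈ S_Φ} sup_{u ∈ [0,T]} ‖z u − X (s+u)‖ ≥ α`. -/
def HypH1 {m : ℕ} {Ω : Type*} [MeasurableSpace Ω] (μ : Measure Ω)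
    (𝓕 : ℝ → MeasurableSpace Ω) (F : Euc m → Set (Euc m)) (X : ℝ → Ω → Euc m) : Prop :=
  ∃ w : ℝ → ℝ → ℝ → ℝ,
    (∀ α > 0, ∀ T > 0, Antitone (fun t => w t α T) ∧ Tendsto (fun t => w t α T) atTop (𝓝 0)) ∧
    ∀ α > 0, ∀ T > 0, ∀ t : ℝ, ∀ᵐ ω ∂μ,
      (μ[Set.indicator {ω' | α ≤ ⨆ s : Ici t, distToSol F (fun u => X ((s : ℝ) + u) ω') T}
          (fun _ => (1:ℝ)) | 𝓕 t]) ω ≤ w t α T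

/-- `F^δ(x) = {y | ∃ z ∈ B(x,δ), dist(y, F z) < δ}`, with the convention `F^0 = F`. -/
def Fdelta {m : ℕ} (F : Euc m → Set (Euc m)) (δ : ℝ) (x : Euc m) : Set (Euc m) :=
  if δ = 0 then F x
  else {y | ∃ z : Euc m, dist z x < δ ∧ Metric.infDist y (F z) < δ}

/-- A `(δ(·), V(·))`-perturbed solution of `dx/dt ∈ F x`. -/
def IsPerturbedSolution {m : ℕ} (F : Euc m → Set (Euc m)) (δ : ℝ → ℝ) (V : ℝ → Euc m)
    (y : ℝ → Euc m) : Prop :=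
  Continuous y ∧ (∀ t > 0, 0 < δ t) ∧ Antitone δ ∧ Tendsto δ atTop (𝓝 0) ∧
  (∀ a b : ℝ, IntervalIntegrable V volume a b) ∧
  (∀ T > 0, Tendsto (fun t => ⨆ u : Icc (0:ℝ) T, ‖∫ r in t..(t + (u : ℝ)), V r‖)
    atTop (𝓝 0)) ∧
  ∃ h : ℝ → Euc m, (∀ a b : ℝ, IntervalIntegrable h volume a b) ∧
    (∀ᵐ t ∂(volume.restrict (Ioi (0:ℝ))), h t - V t ∈ Fdelta F (δ t) (y t)) ∧
    ∀ t ∈ Ici (0:ℝ), y t = y 0 + ∫ u in (0:ℝ)..t, h u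

/-- `Δ(n,T) = sup_{n < k ≤ m(τ_n + T)} ‖∑_{i=n}^{k-1} γ_{i+1} U_{i+1}‖`. -/
def DeltaNT {m : ℕ} {Ω : Type*} (γ : ℕ → ℝ) (U : ℕ → Ω → Euc m) (T : ℝ) (n : ℕ)
    (ω : Ω) : ℝ :=
  ⨆ k : {k : ℕ // n < k ∧ k ≤ mIdx γ (tauOf γ n + T)},
    ‖∑ i ∈ Finset.Ico n (k : ℕ), γ (i + 1) • U (i + 1) ω‖

/-- Condition (bruit2): the conditional probability that `sup_{m ≥ n} Δ(m,T) ≥ ε` is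
dominated by some `w n ε T` decreasing to `0` in `n`. -/
def Bruit2 {m : ℕ} {Ω : Type*} [MeasurableSpace Ω] (μ : Measure Ω)
    (𝓕 : ℕ → MeasurableSpace Ω) (γ : ℕ → ℝ) (U : ℕ → Ω → Euc m) : Prop :=
  ∃ w : ℕ → ℝ → ℝ → ℝ,
    (∀ ε > 0, ∀ T > 0, Antitone (fun n => w n ε T) ∧ Tendsto (fun n => w n ε T) atTop (𝓝 0)) ∧
    ∀ ε > 0, ∀ T > 0, ∀ n : ℕ, ∀ᵐ ω ∂μ,
      (μ[Set.indicator {ω' | ε ≤ ⨆ k : Ici n, DeltaNT γ U T (k : ℕ) ω'}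
          (fun _ => (1:ℝ)) | 𝓕 n]) ω ≤ w n ε T

/-- Topological `limsup` of a sequence of sets: points whose every neighborhood
meets infinitely many of the sets. -/
def setLimsup {X : Type*} [TopologicalSpace X] (A : ℕ → Set X) : Set X :=
  {y | ∀ U ∈ 𝓝 y, {n | (U ∩ A n).Nonempty}.Infinite}

/-- The operator `Λ^δ` on continuous paths `[0,T] → ℝ^m` (with `Λ^0 = Λ`). -/
def LambdaD {m : ℕ} (F : Euc m → Set (Euc m)) (T : ℝ) (hT : 0 ≤ T) (δ : ℝ)
    (z : C(Icc (0:ℝ) T, Euc m)) : Set C(Icc (0:ℝ) T, Euc m) :=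
  {y | ∃ h : ℝ → Euc m, IntervalIntegrable h volume 0 T ∧
    (∀ u : Icc (0:ℝ) T, h u ∈ Fdelta F δ (z u)) ∧
    ∀ τ : Icc (0:ℝ) T, y τ = z ⟨0, Set.left_mem_Icc.mpr hT⟩ + ∫ u in (0:ℝ)..(τ : ℝ), h u}

/-- `Φ^T(M) = closure (⋃_{s ∈ [0,T]} Φ_s(M))`. -/
def PhiTM {m : ℕ} (F : Euc m → Set (Euc m)) (T : ℝ) (M : Set (Euc m)) : Set (Euc m) :=
  closure (⋃ s ∈ Icc (0:ℝ) T, ⋃ x ∈ M, PhiT F s x)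

/-- `‖F‖ = sup_{x ∈ Φ^T(M)} sup_{y ∈ F x} ‖y‖`. -/
def normF {m : ℕ} (F : Euc m → Set (Euc m)) (T : ℝ) (M : Set (Euc m)) : ℝ :=
  sSup {r | ∃ x ∈ PhiTM F T M, ∃ y ∈ F x, r = ‖y‖}

/-- `K_C`: Lipschitz paths with constant `‖F‖ + C + 1` starting in `M`. -/
def KC {m : ℕ} (F : Euc m → Set (Euc m)) (T : ℝ) (hT : 0 ≤ T) (M : Set (Euc m))
    (C : ℝ) : Set C(Icc (0:ℝ) T, Euc m) :=
  {y | (∀ u v : Icc (0:ℝ) T, ‖y u - y v‖ ≤ (normF F T M + C + 1) * |(u : ℝ) - (v : ℝ)|) ∧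
    y ⟨0, Set.left_mem_Icc.mpr hT⟩ ∈ M}

/-- `S_{[0,T]}`: restrictions to `[0,T]` of solutions starting in `M`. -/
def SolRestrict {m : ℕ} (F : Euc m → Set (Euc m)) (T : ℝ) (M : Set (Euc m)) :
    Set C(Icc (0:ℝ) T, Euc m) :=
  {y | ∃ z : ℝ → Euc m, IsSolution F z ∧ z 0 ∈ M ∧ ∀ u : Icc (0:ℝ) T, y u = z u}

/-- A generalised stochastic approximation process relative to `F`. -/
def IsGSAP {m : ℕ} {Ω : Type*} [MeasurableSpace Ω] (μ : Measure Ω)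
    (F : Euc m → Set (Euc m)) (M : Set (Euc m)) (γ : ℕ → ℝ)
    (Fn : ℕ → Euc m → Set (Euc m)) (U : ℕ → Ω → Euc m) (x : ℕ → Ω → Euc m) : Prop :=
  (∀ n, 0 < γ n) ∧
  Tendsto (fun n => ∑ i ∈ Finset.range n, γ (i + 1)) atTop atTop ∧
  Tendsto γ atTop (𝓝 0) ∧
  (∃ C, ∀ n ω, ‖U n ω‖ ≤ C) ∧
  (∀ n ω, x (n + 1) ω - x n ω - γ (n + 1) • U (n + 1) ω ∈ γ (n + 1) • Fn n (x n ω)) ∧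
  (∀ T > 0, ∀ᵐ ω ∂μ, Tendsto
    (fun n => ⨆ k : {k : ℕ // ∑ i ∈ Finset.Ico n k, γ i ≤ T},
      ‖∑ i ∈ Finset.Ico n (k : ℕ), γ (i + 1) • U (i + 1) ω‖) atTop (𝓝 0)) ∧
  (∀ n ω, x n ω ∈ M) ∧
  (∀ δ > 0, ∃ n₀ : ℕ, ∀ n ≥ n₀, ∀ ω, Fn n (x n ω) ⊆ Fdelta F δ (x n ω))

lemma aux_usc {m : ℕ} {F : Euc m → Set (Euc m)} (hF : IsStandardSVM F)
    {B : ℝ} (hB : ∀ x, ∀ y ∈ F x, ‖y‖ ≤ B) (x : Euc m) {ε : ℝ} (hε : 0 < ε) :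
    ∀ᶠ x' in 𝓝 x, F x' ⊆ Metric.thickening ε (F x) := by
  have hK : IsCompact (Metric.closedBall (0 : Euc m) B \ Metric.thickening ε (F x)) :=
    (isCompact_closedBall _ _).diff Metric.isOpen_thickening
  have h := hK.eventually_forall_of_forall_eventually (x₀ := x) (P := fun a b => b ∉ F a) (by
    intro y hy
    have : (x, y) ∈ {p : Euc m × Euc m | p.2 ∈ F p.1}ᶜ := by
      intro h
      exact hy.2 (Metric.self_subset_thickening hε _ h)
    exact hF.2.1.isOpen_compl.mem_nhds this)
  filter_upwards [h] with x' hx' y hy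
  by_contra hn
  exact hx' y ⟨by simpa using hB _ _ hy, hn⟩ hy

lemma aux_usc_delta {m : ℕ} {F : Euc m → Set (Euc m)} (hF : IsStandardSVM F)
    {B : ℝ} (hB : ∀ x, ∀ y ∈ F x, ‖y‖ ≤ B) (x : Euc m) {ε : ℝ} (hε : 0 < ε) :
    ∃ η > 0, ∀ x' δ, 0 < δ → δ < η → dist x' x < η →
      Fdelta F δ x' ⊆ Metric.cthickening ε (F x) := by
  obtain ⟨η, hη, h⟩ := Metric.eventually_nhds_iff.1 (aux_usc hF hB x (half_pos hε))
  refine ⟨min (η / 2) (ε / 2), by positivity, fun x' δ h0 hδ hx y hy => ?_⟩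
  rw [lt_min_iff] at hδ hx
  rw [Fdelta, if_neg h0.ne'] at hy
  obtain ⟨w, hw, hy⟩ := hy
  obtain ⟨p, hp, hyp⟩ := (Metric.infDist_lt_iff (hF.1 w).1).1 hy
  have h1 : dist w x < η := by
    have := dist_triangle w x' x
    linarith [hδ.1, hx.1]
  obtain ⟨q, hq, hpq⟩ := Metric.mem_thickening_iff.1 (h h1 hp)
  refine Metric.thickening_subset_cthickening _ _ (Metric.mem_thickening_iff.2 ⟨q, hq, ?_⟩)
  have := dist_triangle y p q
  linarith [hδ.2]

lemma aux_bound {m : ℕ} {F : Euc m → Set (Euc m)} (hF : IsStandardSVM F)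
    {B : ℝ} (hB : ∀ x, ∀ y ∈ F x, ‖y‖ ≤ B) {x : Euc m} {δ : ℝ} (h0 : 0 < δ) {y : Euc m}
    (hy : y ∈ Fdelta F δ x) : ‖y‖ ≤ B + δ := by
  rw [Fdelta, if_neg h0.ne'] at hy
  obtain ⟨w, hw, hy⟩ := hy
  obtain ⟨p, hp, hyp⟩ := (Metric.infDist_lt_iff (hF.1 w).1).1 hy
  have h1 := hB _ _ hp
  have h2 := norm_le_norm_add_norm_sub' y p
  rw [dist_eq_norm] at hyp
  linarith

lemma aux_derivInt {m : ℕ} {Y : ℝ → Euc m} {K : NNReal} (hY : LipschitzWith K Y) (a b : ℝ) :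
    IntervalIntegrable (deriv Y) volume a b := by
  rw [intervalIntegrable_iff]
  refine Measure.integrableOn_of_bounded (M := K) ?_ ?_ ?_
  · simp
  · exact (stronglyMeasurable_deriv Y).aestronglyMeasurable
  · exact Eventually.of_forall fun x => norm_deriv_le_of_lipschitz hY

lemma aux_ftc {m : ℕ} {Y : ℝ → Euc m} {K : NNReal} (hY : LipschitzWith K Y) (a b : ℝ) :
    ∫ u in a..b, deriv Y u = Y b - Y a := by
  ext i
  let L : Euc m →L[ℝ] ℝ := EuclideanSpace.proj i
  have h1 : L (∫ u in a..b, deriv Y u) = ∫ u in a..b, L (deriv Y u) :=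
    (L.intervalIntegral_comp_comm (aux_derivInt hY a b)).symm
  have hL : LipschitzWith (‖L‖₊ * K) (fun u => L (Y u)) := L.lipschitz.comp hY
  have h2 : ∫ u in a..b, L (deriv Y u) = ∫ u in a..b, deriv (fun u => L (Y u)) u := by
    apply intervalIntegral.integral_congr_ae
    filter_upwards [hY.ae_differentiableAt_real] with u hu _
    exact ((L.hasFDerivAt.comp_hasDerivAt u hu.hasDerivAt).deriv).symm
  have h3 := (hL.lipschitzOnWith (s := uIcc a b)).absolutelyContinuousOnInterval.integral_deriv_eq_sub
  have h4 : L (∫ u in a..b, deriv Y u) = L (Y b) - L (Y a) := by rw [h1, h2, h3]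
  simpa [L] using h4

lemma aux_avg {m : ℕ} {K : Set (Euc m)} (hK : Convex ℝ K) (hKc : IsClosed K) {a b : ℝ}
    (hab : a < b) {h : ℝ → Euc m} (hi : IntervalIntegrable h volume a b)
    (hm : ∀ u ∈ Icc a b, h u ∈ K) : (b - a)⁻¹ • ∫ u in a..b, h u ∈ K := by
  rw [← interval_average_eq, uIoc_of_le hab.le]
  refine hK.set_average_mem hKc (by simp [hab]) (by simp) ?_ ?_
  · exact (ae_restrict_iff' measurableSet_Ioc).2
      (Eventually.of_forall fun u hu => hm u (Ioc_subset_Icc_self hu))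
  · exact (intervalIntegrable_iff_integrableOn_Ioc_of_le hab.le).1 hi

/-- (Corollary `limsuplambdadelta`.) If `z_n → z` uniformly on
`[0,T]` and `δ_n > 0` with `δ_n → 0`, then `limsup_n Λ^{δ_n}(z_n) ⊆ Λ(z)` for a
bounded standard set-valued map `F`. -/
theorem limsup_LambdaD_subset
    {m : ℕ} (F : Euc m → Set (Euc m)) (hF : IsStandardSVM F)
    (hFbdd : ∃ B : ℝ, ∀ x, ∀ y ∈ F x, ‖y‖ ≤ B)
    (T : ℝ) (hT : 0 < T)
    (z : C(Icc (0:ℝ) T, Euc m)) (zn : ℕ → C(Icc (0:ℝ) T, Euc m))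
    (hz : Tendsto zn atTop (𝓝 z))
    (δn : ℕ → ℝ) (hδpos : ∀ n, 0 < δn n) (hδ0 : Tendsto δn atTop (𝓝 0)) :
    setLimsup (fun n => LambdaD F T hT.le (δn n) (zn n)) ⊆ LambdaD F T hT.le 0 z := by
  obtain ⟨B, hB⟩ := hFbdd
  have hB0 : 0 ≤ B := by
    obtain ⟨p, hp⟩ := (hF.1 0).1
    exact (norm_nonneg p).trans (hB _ _ hp)
  intro y hy
  have hseq : ∀ k : ℕ, ∃ n ≥ k, ∃ w ∈ LambdaD F T hT.le (δn n) (zn n),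
      dist w y < 1 / ((k : ℝ) + 1) := by
    intro k
    obtain ⟨n, ⟨w, hw1, hw2⟩, hn⟩ := (hy _ (Metric.ball_mem_nhds y
      (Nat.one_div_pos_of_nat (n := k) (α := ℝ)))).exists_gt k
    exact ⟨n, hn.le, w, hw2, hw1⟩
  choose φ hφ w hw hwy using hseq
  choose h hi hmem hint using hw
  have hφt : Tendsto φ atTop atTop := tendsto_atTop_mono hφ tendsto_id
  have hδφ : Tendsto (fun k => δn (φ k)) atTop (𝓝 0) := hδ0.comp hφt
  have hzφ : Tendsto (fun k => zn (φ k)) atTop (𝓝 z) := hz.comp hφt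
  have hwt : Tendsto w atTop (𝓝 y) := by
    rw [tendsto_iff_dist_tendsto_zero]
    exact squeeze_zero (fun _ => dist_nonneg) (fun k => (hwy k).le)
      tendsto_one_div_add_atTop_nhds_zero_nat
  have hev : ∀ u : Icc (0:ℝ) T, Tendsto (fun k => w k u) atTop (𝓝 (y u)) := fun u =>
    ((continuous_eval_const (F := C(Icc (0:ℝ) T, Euc m)) u).tendsto y).comp hwt
  have hevz : ∀ u : Icc (0:ℝ) T, Tendsto (fun k => zn (φ k) u) atTop (𝓝 (z u)) := fun u =>
    ((continuous_eval_const (F := C(Icc (0:ℝ) T, Euc m)) u).tendsto z).comp hzφ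
  have hi' : ∀ k, ∀ s t : Icc (0:ℝ) T, IntervalIntegrable (h k) volume s t := fun k s t =>
    (hi k).mono_set (by
      rw [uIcc_of_le hT.le]
      exact uIcc_subset_Icc s.2 t.2)
  have hdiff : ∀ k, ∀ s t : Icc (0:ℝ) T, w k t - w k s = ∫ u in (s:ℝ)..t, h k u := by
    intro k s t
    rw [hint k s, hint k t, add_sub_add_left_eq_sub]
    exact intervalIntegral.integral_interval_sub_left
      (hi' k ⟨0, left_mem_Icc.2 hT.le⟩ t) (hi' k ⟨0, left_mem_Icc.2 hT.le⟩ s)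
  have hy0 : y ⟨0, left_mem_Icc.2 hT.le⟩ = z ⟨0, left_mem_Icc.2 hT.le⟩ := by
    refine tendsto_nhds_unique (hev _) ?_
    refine (hevz ⟨0, left_mem_Icc.2 hT.le⟩).congr fun k => ?_
    rw [hint k]; simp
  have hlip : ∀ s t : Icc (0:ℝ) T, ‖y t - y s‖ ≤ B * |(t:ℝ) - s| := by
    intro s t
    have h1 : Tendsto (fun k => ‖w k t - w k s‖) atTop (𝓝 ‖y t - y s‖) :=
      ((hev t).sub (hev s)).norm
    have h2 : Tendsto (fun k => (B + δn (φ k)) * |(t:ℝ) - s|) atTop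
        (𝓝 ((B + 0) * |(t:ℝ) - s|)) := (hδφ.const_add B).mul_const _
    rw [add_zero] at h2
    refine le_of_tendsto_of_tendsto' h1 h2 fun k => ?_
    rw [hdiff]
    refine intervalIntegral.norm_integral_le_of_norm_le_const fun u hu => ?_
    have hu' : u ∈ Icc (0:ℝ) T := uIcc_subset_Icc s.2 t.2 (uIoc_subset_uIcc hu)
    exact aux_bound hF hB (hδpos _) (hmem k ⟨u, hu'⟩)
  set Y : ℝ → Euc m := IccExtend hT.le y with hYdef
  have hYe : ∀ u : Icc (0:ℝ) T, Y u = y u := fun u => IccExtend_val _ _ u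
  have hY : LipschitzWith B.toNNReal Y := by
    have : LipschitzWith B.toNNReal y := LipschitzWith.of_dist_le_mul fun s t => by
      rw [Real.coe_toNNReal _ hB0, dist_eq_norm]
      exact hlip t s
    have h2 := this.comp (LipschitzWith.projIcc hT.le)
    rw [mul_one] at h2
    exact h2
  -- key step
  have key : ∀ t (ht : t ∈ Ioo 0 T), DifferentiableAt ℝ Y t →
      deriv Y t ∈ F (z ⟨t, Ioo_subset_Icc_self ht⟩) := by
    intro t ht hd
    set x := z ⟨t, Ioo_subset_Icc_self ht⟩ with hx
    have hcl : IsClosed (F x) := (hF.1 x).2.1.isClosed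
    rw [← hcl.closure_eq, Metric.closure_eq_iInter_cthickening, mem_iInter₂]
    intro ε hε
    obtain ⟨η, hη, husc⟩ := aux_usc_delta hF hB x hε
    obtain ⟨ρ, hρ, hzc⟩ := Metric.continuousAt_iff.1
      (z.continuous.continuousAt (x := ⟨t, Ioo_subset_Icc_self ht⟩)) (η / 2) (half_pos hη)
    have hslope := (hasDerivWithinAt_iff_tendsto_slope' (by simp)).1
      (hd.hasDerivAt.hasDerivWithinAt (s := Ioi t))
    refine Metric.isClosed_cthickening.mem_of_tendsto hslope ?_
    have e1 : ∀ᶠ s in 𝓝[>] t, s ∈ Ioo t (min T (t + ρ)) :=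
      Ioo_mem_nhdsGT (lt_min ht.2 (by linarith))
    filter_upwards [e1] with s hs
    have hs2 := lt_min_iff.1 hs.2
    have hsI : s ∈ Icc (0:ℝ) T := ⟨ht.1.le.trans hs.1.le, hs2.1.le⟩
    have hlim : Tendsto (fun k => (s - t)⁻¹ • (w k ⟨s, hsI⟩ - w k ⟨t, Ioo_subset_Icc_self ht⟩))
        atTop (𝓝 (slope Y t s)) := by
      rw [slope_def_module, hYe ⟨s, hsI⟩, hYe ⟨t, Ioo_subset_Icc_self ht⟩]
      exact ((hev _).sub (hev _)).const_smul _
    refine Metric.isClosed_cthickening.mem_of_tendsto hlim ?_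
    filter_upwards [hδφ.eventually_lt_const hη,
      (Metric.tendsto_nhds.1 hzφ) (η / 2) (half_pos hη)] with k hk1 hk2
    rw [hdiff]
    refine aux_avg ((hF.1 x).2.2.cthickening _) Metric.isClosed_cthickening hs.1
      (hi' k ⟨t, Ioo_subset_Icc_self ht⟩ ⟨s, hsI⟩) fun u hu => ?_
    have huI : u ∈ Icc (0:ℝ) T := ⟨ht.1.le.trans hu.1, hu.2.trans hsI.2⟩
    refine husc (zn (φ k) ⟨u, huI⟩) _ (hδpos _) hk1 ?_ (hmem k ⟨u, huI⟩)
    have d1 := ContinuousMap.dist_apply_le_dist (f := zn (φ k)) (g := z) ⟨u, huI⟩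
    have d2 : dist (z ⟨u, huI⟩) x < η / 2 := hzc (by
      rw [Subtype.dist_eq, Real.dist_eq, abs_lt]
      constructor <;> simp <;> linarith [hu.1, hu.2, hs2.2])
    have := dist_triangle (zn (φ k) ⟨u, huI⟩) (z ⟨u, huI⟩) x
    linarith
  classical
  choose sel hsel using fun x => (hF.1 x).1
  let Z : ℝ → Euc m := IccExtend hT.le z
  let H : ℝ → Euc m := fun u => if deriv Y u ∈ F (Z u) then deriv Y u else sel (Z u)
  have hHmem : ∀ u, H u ∈ F (Z u) := by
    intro u
    by_cases hu : deriv Y u ∈ F (Z u)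
    · simp only [H, if_pos hu]; exact hu
    · simp only [H, if_neg hu]; exact hsel _
  have hae : ∀ᵐ u, u ∈ Icc (0:ℝ) T → deriv Y u = H u := by
    have n0 : ∀ᵐ u : ℝ, u ≠ 0 := by simp [ae_iff]
    have n1 : ∀ᵐ u : ℝ, u ≠ T := by simp [ae_iff]
    filter_upwards [hY.ae_differentiableAt_real, n0, n1] with u hu h0 h1 hI
    have hk := key u ⟨lt_of_le_of_ne hI.1 h0.symm, lt_of_le_of_ne hI.2 h1⟩ hu
    have hZ : Z u = z ⟨u, hI⟩ := IccExtend_of_mem _ _ hI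
    simp only [H, hZ, if_pos hk]
  refine ⟨H, ?_, ?_, ?_⟩
  · refine (aux_derivInt hY 0 T).congr_ae ?_
    rw [uIoc_of_le hT.le]
    refine (ae_restrict_iff' measurableSet_Ioc).2 ?_
    filter_upwards [hae] with u hu hI
    exact hu (Ioc_subset_Icc_self hI)
  · intro u
    have := hHmem u
    rw [show Z u = z u from IccExtend_val _ _ u] at this
    simpa [Fdelta] using this
  · intro τ
    rw [← hy0]
    have e : ∫ u in (0:ℝ)..τ, H u = ∫ u in (0:ℝ)..τ, deriv Y u := by
      apply intervalIntegral.integral_congr_ae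
      filter_upwards [hae] with u hu hI
      rw [uIoc_of_le τ.2.1] at hI
      exact (hu ⟨hI.1.le, hI.2.trans τ.2.2⟩).symm
    rw [e, aux_ftc hY, hYe τ, hYe ⟨0, left_mem_Icc.2 hT.le⟩]
    abel
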